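/- arXiv:1604.03924 — 2 statements merged into one kernel-verified Lean document; each statement's English description precedes it below -/
import Mathlib

section
/- Let X be a countable data domain, A : X^n → Y an (ε,δ)-differentially private algorithm, and X = (X₁,…,X_n) ~ P^n. For δ̂ > 0, define E_i(δ̂) as the set of pairs (a, x₁^{i−1}) ∈ Y × X^{i−1} such that the marginal distribution of X_i is (3ε, δ̂)-indistinguishable from the conditional distribution of X_i given A(X) = a and X₁^{i−1} = x₁^{i−1}. Then for each i ∈ {1,…,n}, each prefix x₁^{i−1} ∈ X^{i−1} with positive probability, and every δ̂ > 0, Pr[ (A(X), x₁^{i−1}) ∈ E_i(δ̂) | X₁^{i−1} = x₁^{i−1} ] ≥ 1 − δ', where δ' = 2δ/δ̂ + 2δ/(1 − e^{−ε}). -/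
open scoped ENNReal

/-- The probability that a sample from the probability mass function `μ` lands in `S`. -/
noncomputable def prob {α : Type*} (μ : PMF α) (S : Set α) : ℝ :=
  (μ.toOuterMeasure S).toReal

/-- The independent coupling of two distributions: a pair whose components are independent
with the given marginal distributions. -/
noncomputable def indepPair {α β : Type*} (p : PMF α) (q : PMF β) : PMF (α × β) :=
  p.bind fun a => q.map fun b => (a, b)

/-- `MaxInfoLe μ b k` : the `b`-approximate max-information of the joint distribution `μ`
is at most `k` (measured in bits):  for every event `O` with `Pr[(X,Z) ∈ O] > b`,
`Pr[(X,Z) ∈ O] - b ≤ 2^k · Pr[X ⊗ Z ∈ O]`. -/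
def MaxInfoLe {α β : Type*} (μ : PMF (α × β)) (b k : ℝ) : Prop :=
  ∀ O : Set (α × β), b < prob μ O →
    prob μ O - b ≤ 2 ^ k * prob (indepPair (μ.map Prod.fst) (μ.map Prod.snd)) O

/-- The `n`-fold product (i.i.d.) distribution `P^n` on datasets of size `n`. -/
noncomputable def iidPMF {X : Type*} (P : PMF X) : (n : ℕ) → PMF (Fin n → X)
  | 0 => PMF.pure (fun i => i.elim0)
  | n + 1 => P.bind fun a => (iidPMF P n).map fun x => Fin.cons a x

/-- The joint distribution of `(X, A(X))` where `X ∼ μ` and `A` is a randomized algorithm. -/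
noncomputable def jointPMF {D Y : Type*} (μ : PMF D) (A : D → PMF Y) : PMF (D × Y) :=
  μ.bind fun x => (A x).map fun y => (x, y)
/-- Two datasets are neighboring if they differ in at most one entry. -/
def Neighbor {X : Type*} {n : ℕ} (x x' : Fin n → X) : Prop :=
  ∃ i : Fin n, ∀ j : Fin n, j ≠ i → x j = x' j

/-- `(ε,δ)`-differential privacy of a randomized algorithm `A` on datasets of size `n`. -/
def DiffPrivate {X Y : Type*} {n : ℕ} (A : (Fin n → X) → PMF Y) (ε δ : ℝ) : Prop :=
  ∀ x x' : Fin n → X, Neighbor x x' → ∀ O : Set Y,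
    prob (A x) O ≤ Real.exp ε * prob (A x') O + δ

/-- `PrefixEq i w x` : the dataset `x` agrees with `w` on all coordinates before `i`
(i.e. `x` has prefix `x₁^{i-1} = w₁^{i-1}`). -/
def PrefixEq {X : Type*} {n : ℕ} (i : Fin n) (w x : Fin n → X) : Prop :=
  ∀ j : Fin n, (j : ℕ) < (i : ℕ) → x j = w j

/-- The conditional probability `Pr[X_i ∈ O | A(X) = a, X₁^{i-1} = w₁^{i-1}]`, computed from the
joint distribution `μ` of the pair `(X, A(X))`. -/
noncomputable def condXi {X Y : Type*} {n : ℕ} (μ : PMF ((Fin n → X) × Y)) (i : Fin n)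
    (a : Y) (w : Fin n → X) (O : Set X) : ℝ :=
  prob μ {p | p.2 = a ∧ PrefixEq i w p.1 ∧ p.1 i ∈ O} /
    prob μ {p | p.2 = a ∧ PrefixEq i w p.1}

/-- `(ε,δ)`-indistinguishability of two distributions presented as set functions. -/
def IndistFn {D : Type*} (F G : Set D → ℝ) (ε δ : ℝ) : Prop :=
  ∀ O : Set D, F O ≤ Real.exp ε * G O + δ ∧ G O ≤ Real.exp ε * F O + δ

/-- The set `E_i(δ̂)` of "good" output/prefix pairs `(a, x₁^{i-1})`: those for which the marginal
distribution of `X_i` is `(3ε, δ̂)`-indistinguishable from the conditional distribution of `X_i`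
given `A(X) = a` and `X₁^{i-1} = x₁^{i-1}`. -/
def Eset {X Y : Type*} {n : ℕ} (μ : PMF ((Fin n → X) × Y)) (P : PMF X) (i : Fin n)
    (ε δhat : ℝ) : Set (Y × (Fin n → X)) :=
  {q | IndistFn (fun O => prob P O) (fun O => condXi μ i q.1 q.2 O) (3 * ε) δhat}

/-- The set `F_i` of output/prefix pairs `(a, x₁^i)` for which the likelihood ratio
`Pr[X_i = x_i | a, x₁^{i-1}] / Pr[X_i = x_i]` lies in `[e^{-6ε}, e^{6ε}]`. -/
def Fset {X Y : Type*} {n : ℕ} (μ : PMF ((Fin n → X) × Y)) (P : PMF X) (i : Fin n)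
    (ε : ℝ) : Set (Y × (Fin n → X)) :=
  {q | Real.exp (-(6 * ε)) ≤ condXi μ i q.1 q.2 {q.2 i} / (P (q.2 i)).toReal ∧
       condXi μ i q.1 q.2 {q.2 i} / (P (q.2 i)).toReal ≤ Real.exp (6 * ε)}

/-- `Z_i(a, x₁^i) = log₂( Pr[X_i = x_i | a, x₁^{i-1}] / Pr[X_i = x_i] )`. -/
noncomputable def Zi {X Y : Type*} {n : ℕ} (μ : PMF ((Fin n → X) × Y)) (P : PMF X)
    (i : Fin n) (q : Y × (Fin n → X)) : ℝ :=
  Real.logb 2 (condXi μ i q.1 q.2 {q.2 i} / (P (q.2 i)).toReal)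

/-- The set `G_i(δ̂)` of "good" tuples: `(a, x₁^{i-1}) ∈ E_i(δ̂)` and `(a, x₁^i) ∈ F_i`. -/
def Gset {X Y : Type*} {n : ℕ} (μ : PMF ((Fin n → X) × Y)) (P : PMF X) (i : Fin n)
    (ε δhat : ℝ) : Set (Y × (Fin n → X)) :=
  {q | q ∈ Eset μ P i ε δhat ∧ q ∈ Fset μ P i ε}

/-- `G_{≤ i}(δ̂)` : membership in `G_j(δ̂)` for every `j ≤ i`. -/
def GleSet {X Y : Type*} {n : ℕ} (μ : PMF ((Fin n → X) × Y)) (P : PMF X) (i : Fin n)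
    (ε δhat : ℝ) : Set (Y × (Fin n → X)) :=
  {q | ∀ j : Fin n, j ≤ i → q ∈ Gset μ P j ε δhat}

/-- `T_i(a, x₁^i)` equals `Z_i(a, x₁^i)` on the good set `G_{≤ i}(δ̂)` and `0` otherwise. -/
noncomputable def Ti {X Y : Type*} {n : ℕ} (μ : PMF ((Fin n → X) × Y)) (P : PMF X)
    (i : Fin n) (ε δhat : ℝ) : (Y × (Fin n → X)) → ℝ :=
  (GleSet μ P i ε δhat).indicator (Zi μ P i)


open Classical in
/-- Indicator as an `ENNReal` factor. -/
noncomputable def chi {α : Type*} (S : Set α) (x : α) : ℝ≥0∞ := if x ∈ S then 1 else 0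

lemma chi_le_one {α : Type*} (S : Set α) (x : α) : chi S x ≤ 1 := by
  unfold chi; split_ifs <;> simp

lemma outer_eq {α : Type*} (μ : PMF α) (S : Set α) :
    μ.toOuterMeasure S = ∑' x, chi S x * μ x := by
  rw [PMF.toOuterMeasure_apply]
  refine tsum_congr fun x => ?_
  unfold chi
  by_cases h : x ∈ S <;> simp [h]

lemma joint_apply {D Y : Type*} (μ : PMF D) (A : D → PMF Y) (p : D × Y) :
    jointPMF μ A p = μ p.1 * A p.1 p.2 := by
  classical
  obtain ⟨z, y⟩ := p
  unfold jointPMF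
  rw [PMF.bind_apply, tsum_eq_single z]
  · rw [PMF.map_apply, tsum_eq_single y]
    · simp
    · intro b hb
      rw [if_neg]
      intro h
      exact hb (Prod.mk.inj h).2.symm
  · intro b hb
    rw [PMF.map_apply]
    refine mul_eq_zero_of_right _ (ENNReal.tsum_eq_zero.mpr fun a => if_neg ?_)
    intro h
    exact hb (Prod.mk.inj h).1.symm

lemma iid_apply {X : Type*} (P : PMF X) : ∀ (n : ℕ) (z : Fin n → X),
    iidPMF P n z = ∏ j, P (z j)
  | 0, z => by
    have : z = (fun i => i.elim0) := Subsingleton.elim _ _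
    simp [iidPMF, this]
  | n + 1, z => by
    classical
    unfold iidPMF
    rw [PMF.bind_apply, tsum_eq_single (z 0)]
    · rw [PMF.map_apply, tsum_eq_single (Fin.tail z)]
      · rw [if_pos (Fin.cons_self_tail z).symm, iid_apply P n, Fin.prod_univ_succ]
        rfl
      · intro b hb
        rw [if_neg]
        intro h
        apply hb
        rw [h, Fin.tail_cons]
    · intro b hb
      rw [PMF.map_apply]
      refine mul_eq_zero_of_right _ (ENNReal.tsum_eq_zero.mpr fun a => if_neg ?_)
      intro h
      apply hb
      rw [h, Fin.cons_zero]

/-- hockey-stick divergence bound -/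
lemma hockey {Y : Type*} (f g : Y → ℝ≥0∞) (e D : ℝ≥0∞) (hfin : ∑' a, f a ≠ ⊤)
    (h : ∀ O : Set Y, ∑' a, chi O a * f a ≤ e * (∑' a, chi O a * g a) + D) :
    ∑' a, (f a - e * g a) ≤ D := by
  set O : Set Y := {a | e * g a < f a} with hO
  have h1 : ∑' a, (f a - e * g a) + e * (∑' a, chi O a * g a) = ∑' a, chi O a * f a := by
    rw [← ENNReal.tsum_mul_left, ← ENNReal.tsum_add]
    refine tsum_congr fun a => ?_
    unfold chi
    by_cases ha : e * g a < f a
    · have : a ∈ O := ha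
      simp only [this, if_true, one_mul]
      exact tsub_add_cancel_of_le ha.le
    · have : a ∉ O := ha
      simp only [this, if_false, zero_mul, mul_zero, add_zero]
      exact tsub_eq_zero_of_le (not_lt.mp ha)
  have h2 : ∑' a, chi O a * f a ≠ ⊤ := by
    refine ne_top_of_le_ne_top hfin (ENNReal.tsum_le_tsum fun a => ?_)
    calc chi O a * f a ≤ 1 * f a := by gcongr; exact chi_le_one _ _
      _ = f a := one_mul _
  have h3 : e * (∑' a, chi O a * g a) ≠ ⊤ := by
    refine ne_top_of_le_ne_top h2 ?_
    rw [← h1]; exact le_add_self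
  have h4 := h O
  rw [← h1, add_comm] at h4
  exact (ENNReal.add_le_add_iff_left h3).mp h4

lemma split_bound {X : Type*} (O : Set X) (F G : X → ℝ≥0∞) (P : X → ℝ≥0∞) (e : ℝ≥0∞) :
    ∑' x, chi O x * (P x * F x) ≤
      e * (∑' x, chi O x * (P x * G x)) + ∑' x, P x * (F x - e * G x) := by
  rw [← ENNReal.tsum_mul_left, ← ENNReal.tsum_add]
  refine ENNReal.tsum_le_tsum fun x => ?_
  have h : F x ≤ e * G x + (F x - e * G x) := le_add_tsub
  calc chi O x * (P x * F x) ≤ chi O x * (P x * (e * G x + (F x - e * G x))) := by gcongr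
    _ = e * (chi O x * (P x * G x)) + chi O x * (P x * (F x - e * G x)) := by ring
    _ ≤ e * (chi O x * (P x * G x)) + 1 * (P x * (F x - e * G x)) := by
        gcongr; exact chi_le_one _ _
    _ = _ := by rw [one_mul]

lemma core {X Y : Type*} (P : PMF X) (b : X → Y → ℝ≥0∞) (e D d W : ℝ≥0∞)
    (hb : ∀ x, ∑' a, b x a = W) (hW : W ≠ ⊤)
    (h : ∀ x x' (O : Set Y), ∑' a, chi O a * b x a ≤ e * (∑' a, chi O a * b x' a) + D)
    (Bad : Set Y)
    (hBad : ∀ a ∈ Bad, (∑' x, P x * b x a) = 0 ∨ ∃ O : Set X,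
      (e * (∑' x, chi O x * (P x * b x a)) + d * (∑' x, P x * b x a)
          < ∑' x, chi O x * (P x * (∑' x', P x' * b x' a))) ∨
      (e * (∑' x, chi O x * (P x * (∑' x', P x' * b x' a))) + d * (∑' x, P x * b x a)
          < ∑' x, chi O x * (P x * b x a))) :
    d * (∑' a, chi Bad a * ∑' x, P x * b x a) ≤ 2 * D := by
  set M : Y → ℝ≥0∞ := fun a => ∑' x, P x * b x a with hM
  have hP : ∑' x, P x = 1 := P.tsum_coe
  have swap : ∀ O : Set Y, ∑' a, chi O a * M a = ∑' x, P x * ∑' a, chi O a * b x a := by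
    intro O
    simp only [hM, ← ENNReal.tsum_mul_left]
    rw [ENNReal.tsum_comm]
    refine tsum_congr fun x => tsum_congr fun a => by ring
  have hMW : ∑' a, M a = W := by
    simp only [hM]
    rw [ENNReal.tsum_comm]
    simp only [ENNReal.tsum_mul_left, hb, ENNReal.tsum_mul_right, hP, one_mul]
  have k1 : ∀ x, ∑' a, (b x a - e * M a) ≤ D := by
    intro x
    refine hockey _ _ e D (by rw [hb]; exact hW) fun O => ?_
    rw [swap]
    calc ∑' a, chi O a * b x a = ∑' x', P x' * ∑' a, chi O a * b x a := by
          rw [ENNReal.tsum_mul_right, hP, one_mul]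
      _ ≤ ∑' x', (e * (P x' * ∑' a, chi O a * b x' a) + P x' * D) := by
          refine ENNReal.tsum_le_tsum fun x' => ?_
          calc _ ≤ P x' * (e * (∑' a, chi O a * b x' a) + D) := by gcongr; exact h x x' O
            _ = _ := by ring
      _ = _ := by
          rw [ENNReal.tsum_add, ENNReal.tsum_mul_left, ENNReal.tsum_mul_right, hP, one_mul]
  have k2 : ∀ x, ∑' a, (M a - e * b x a) ≤ D := by
    intro x
    refine hockey _ _ e D (by rw [hMW]; exact hW) fun O => ?_
    rw [swap]
    calc ∑' x', P x' * ∑' a, chi O a * b x' a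
        ≤ ∑' x', P x' * (e * (∑' a, chi O a * b x a) + D) := by
          refine ENNReal.tsum_le_tsum fun x' => ?_
          gcongr; exact h x' x O
      _ = _ := by rw [ENNReal.tsum_mul_right, hP, one_mul]
  have avg : ∀ f : X → Y → ℝ≥0∞, (∀ x, ∑' a, f x a ≤ D) →
      ∑' a, ∑' x, P x * f x a ≤ D := by
    intro f hf
    rw [ENNReal.tsum_comm]
    calc ∑' x, ∑' a, P x * f x a ≤ ∑' x, P x * D := by
          refine ENNReal.tsum_le_tsum fun x => ?_
          rw [ENNReal.tsum_mul_left]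
          gcongr; exact hf x
      _ = D := by rw [ENNReal.tsum_mul_right, hP, one_mul]
  rw [← ENNReal.tsum_mul_left]
  calc ∑' a, d * (chi Bad a * M a)
      ≤ ∑' a, ((∑' x, P x * (b x a - e * M a)) + ∑' x, P x * (M a - e * b x a)) := by
        refine ENNReal.tsum_le_tsum fun a => ?_
        by_cases ha : a ∈ Bad
        · have hc : chi Bad a = 1 := by simp [chi, ha]
          rw [hc, one_mul]
          rcases hBad a ha with h0 | ⟨O, h1 | h1⟩
          · have : M a = 0 := h0
            simp [this]
          · have h2 := split_bound O (fun _ => M a) (fun x => b x a) P e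
            have h3 := h1.le.trans h2
            have hf : e * (∑' x, chi O x * (P x * b x a)) ≠ ⊤ :=
              ne_top_of_le_ne_top (ne_top_of_lt h1) le_self_add
            exact ((ENNReal.add_le_add_iff_left hf).mp h3).trans le_add_self
          · have h2 := split_bound O (fun x => b x a) (fun _ => M a) P e
            have h3 := h1.le.trans h2
            have hf : e * (∑' x, chi O x * (P x * M a)) ≠ ⊤ :=
              ne_top_of_le_ne_top (ne_top_of_lt h1) le_self_add
            exact ((ENNReal.add_le_add_iff_left hf).mp h3).trans le_self_add
        · simp [chi, ha]
    _ ≤ D + D := by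
        rw [ENNReal.tsum_add]
        exact add_le_add (avg _ k1) (avg _ k2)
    _ = 2 * D := (two_mul D).symm

section reduction
variable {X Y : Type*} {n : ℕ}

open Classical in
/-- weight of the remaining coordinates -/
noncomputable def restW (P : PMF X) (i : Fin n) (w : Fin n → X)
    (r : {j : Fin n // j ≠ i} → X) : ℝ≥0∞ :=
  (if ∀ j : {j : Fin n // j ≠ i}, (j.1 : ℕ) < (i : ℕ) → r j = w j.1 then 1 else 0) *
    ∏ j, P (r j)

/-- unnormalised output law given `X_i = x` -/
noncomputable def bker (A : (Fin n → X) → PMF Y) (P : PMF X) (i : Fin n) (w : Fin n → X)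
    (x : X) (a : Y) : ℝ≥0∞ :=
  ∑' r, restW P i w r * A ((Equiv.funSplitAt i X).symm (x, r)) a

lemma weight_eq (P : PMF X) (i : Fin n) (w : Fin n → X) (x : X)
    (r : {j : Fin n // j ≠ i} → X) :
    chi {z | PrefixEq i w z} ((Equiv.funSplitAt i X).symm (x, r)) *
      iidPMF P n ((Equiv.funSplitAt i X).symm (x, r)) = P x * restW P i w r := by
  classical
  rw [iid_apply]
  have e1 : ∏ j : {j : Fin n // j = i}, P ((Equiv.funSplitAt i X).symm (x, r) j) = P x := by
    rw [Fintype.prod_eq_single (⟨i, rfl⟩ : {j : Fin n // j = i})]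
    · simp [Equiv.funSplitAt]
    · rintro ⟨j, hj⟩ h; exact absurd (Subtype.ext hj) h
  have e2 : ∏ j : {j : Fin n // ¬ j = i}, P ((Equiv.funSplitAt i X).symm (x, r) j)
      = ∏ j, P (r j) := by
    refine Fintype.prod_congr _ _ ?_
    rintro ⟨j, hj⟩
    simp [Equiv.funSplitAt, hj]
  have e3 : PrefixEq i w ((Equiv.funSplitAt i X).symm (x, r)) ↔
      ∀ j : {j : Fin n // j ≠ i}, (j.1 : ℕ) < (i : ℕ) → r j = w j.1 := by
    constructor
    · rintro h ⟨j, hj⟩ hji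
      have := h j hji
      simpa [Equiv.funSplitAt, hj] using this
    · intro h j hji
      have hj : j ≠ i := by rintro rfl; exact lt_irrefl _ hji
      have := h ⟨j, hj⟩ hji
      simpa [Equiv.funSplitAt, hj] using this
  have e0 : ∏ j, P ((Equiv.funSplitAt i X).symm (x, r) j) = P x * ∏ j, P (r j) := by
    rw [← Fintype.prod_subtype_mul_prod_subtype (fun j => j = i), ← e1, ← e2]
    congr 1
    convert rfl
  rw [e0]
  unfold chi restW
  simp only [Set.mem_ofPred_eq, e3]
  ring

lemma joint_outer (A : (Fin n → X) → PMF Y) (P : PMF X) (i : Fin n) (w : Fin n → X)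
    (T : Set Y) (O : Set X) :
    (jointPMF (iidPMF P n) A).toOuterMeasure
      {p | p.2 ∈ T ∧ PrefixEq i w p.1 ∧ p.1 i ∈ O} =
    ∑' a, chi T a * ∑' x, chi O x * (P x * bker A P i w x a) := by
  classical
  rw [outer_eq, ENNReal.tsum_prod', ENNReal.tsum_comm]
  refine tsum_congr fun a => ?_
  rw [← (Equiv.funSplitAt i X).symm.tsum_eq, ENNReal.tsum_prod', ← ENNReal.tsum_mul_left]
  refine tsum_congr fun x => ?_
  unfold bker
  rw [← ENNReal.tsum_mul_left, ← ENNReal.tsum_mul_left, ← ENNReal.tsum_mul_left]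
  refine tsum_congr fun r => ?_
  rw [joint_apply]
  have hx : (Equiv.funSplitAt i X).symm (x, r) i = x := by simp [Equiv.funSplitAt]
  have hw := weight_eq P i w x r
  set z := (Equiv.funSplitAt i X).symm (x, r) with hz
  have hc : chi {p : (Fin n → X) × Y | p.2 ∈ T ∧ PrefixEq i w p.1 ∧ p.1 i ∈ O} (z, a) =
      chi T a * chi O x * chi {z | PrefixEq i w z} z := by
    unfold chi
    simp only [Set.mem_ofPred_eq, hx]
    by_cases h1 : a ∈ T <;> by_cases h2 : x ∈ O <;> by_cases h3 : PrefixEq i w z <;>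
      simp [h1, h2, h3]
  rw [hc]
  calc _ = chi T a * chi O x * (chi {z | PrefixEq i w z} z * iidPMF P n z) * A z a := by ring
    _ = _ := by rw [hw]; ring

lemma bker_sum (A : (Fin n → X) → PMF Y) (P : PMF X) (i : Fin n) (w : Fin n → X)
    (x : X) (O : Set Y) : ∑' a, chi O a * bker A P i w x a =
      ∑' r, restW P i w r * (A ((Equiv.funSplitAt i X).symm (x, r))).toOuterMeasure O := by
  simp only [outer_eq, bker, ← ENNReal.tsum_mul_left]
  rw [ENNReal.tsum_comm]
  refine tsum_congr fun r => tsum_congr fun a => by ring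

lemma bker_total (A : (Fin n → X) → PMF Y) (P : PMF X) (i : Fin n) (w : Fin n → X)
    (x : X) : ∑' a, bker A P i w x a = ∑' r, restW P i w r := by
  simp only [bker]
  rw [ENNReal.tsum_comm]
  refine tsum_congr fun r => ?_
  rw [ENNReal.tsum_mul_left, PMF.tsum_coe, mul_one]

lemma outer_ne_top {α : Type*} (μ : PMF α) (S : Set α) : μ.toOuterMeasure S ≠ ⊤ := by
  rw [outer_eq]
  refine ne_top_of_le_ne_top (b := 1) (by simp) ?_
  rw [← μ.tsum_coe]
  refine ENNReal.tsum_le_tsum fun a => ?_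
  calc chi S a * μ a ≤ 1 * μ a := by gcongr; exact chi_le_one _ _
    _ = μ a := one_mul _

end reduction

/-- **Claim 3.4.**  If `A` is `(ε,δ)`-differentially private and `X ∼ P^n`, then
for each `i`, each prefix `w₁^{i-1}` of positive probability, and every `δ̂ > 0`,
`Pr[(A(X), x₁^{i-1}) ∈ E_i(δ̂) | X₁^{i-1} = w₁^{i-1}] ≥ 1 - δ'` where
`δ' = 2δ/δ̂ + 2δ/(1 - e^{-ε})`. -/
theorem stmt_7 {X Y : Type*} [Countable X] {n : ℕ} (A : (Fin n → X) → PMF Y)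
    (ε δ δhat : ℝ) (hε : 0 < ε) (hδhat : 0 < δhat) (hA : DiffPrivate A ε δ)
    (P : PMF X) (i : Fin n) (w : Fin n → X)
    (hw : 0 < prob (jointPMF (iidPMF P n) A) {p | PrefixEq i w p.1}) :
    1 - (2 * δ / δhat + 2 * δ / (1 - Real.exp (-ε))) ≤
      prob (jointPMF (iidPMF P n) A)
          {p | PrefixEq i w p.1 ∧ (p.2, w) ∈ Eset (jointPMF (iidPMF P n) A) P i ε δhat} /
        prob (jointPMF (iidPMF P n) A) {p | PrefixEq i w p.1} := by
  classical
  have hδ : 0 ≤ δ := by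
    have := hA w w ⟨i, fun _ _ => rfl⟩ ∅
    simpa [prob] using this
  set μ := jointPMF (iidPMF P n) A with hμ
  set M : Y → ℝ≥0∞ := fun a => ∑' x, P x * bker A P i w x a with hM
  set W : ℝ≥0∞ := ∑' r, restW P i w r with hWdef
  have univ2 : ∀ x : X, chi (Set.univ : Set X) x = 1 := by
    intro x; simp [chi]
  -- the events
  have oT : ∀ T : Set Y, μ.toOuterMeasure {p | PrefixEq i w p.1 ∧ p.2 ∈ T}
      = ∑' a, chi T a * M a := by
    intro T
    have := joint_outer A P i w T Set.univ
    simp only [univ2, one_mul, Set.mem_univ, and_true] at this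
    rw [← hμ] at this
    rw [← this]
    congr 1
    ext p
    exact and_comm
  have oAll : μ.toOuterMeasure {p | PrefixEq i w p.1} = ∑' a, M a := by
    have := oT Set.univ
    simpa [chi] using this
  have single : ∀ (a : Y) (f : Y → ℝ≥0∞), ∑' y, chi {a} y * f y = f a := by
    intro a f
    rw [tsum_eq_single a]
    · simp [chi]
    · intro y hy; simp [chi, hy]
  have oa : ∀ a, μ.toOuterMeasure {p | p.2 = a ∧ PrefixEq i w p.1} = M a := by
    intro a
    rw [← single a M, ← oT]
    congr 1
    ext p
    exact and_comm
  have oaO : ∀ a O, μ.toOuterMeasure {p | p.2 = a ∧ PrefixEq i w p.1 ∧ p.1 i ∈ O}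
      = ∑' x, chi O x * (P x * bker A P i w x a) := by
    intro a O
    have := joint_outer A P i w {a} O
    rw [single a (fun y => ∑' x, chi O x * (P x * bker A P i w x y))] at this
    exact this
  have hMW : ∑' a, M a = W := by
    simp only [hM]
    rw [ENNReal.tsum_comm]
    simp only [ENNReal.tsum_mul_left, bker_total, ENNReal.tsum_mul_right, P.tsum_coe, one_mul]
    rfl
  have hWtop : W ≠ ⊤ := by
    rw [← hMW, ← oAll]; exact outer_ne_top _ _
  have hprobW : prob μ {p | PrefixEq i w p.1} = W.toReal := by
    unfold prob; rw [oAll, hMW]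
  set T : Set Y := {a | (a, w) ∈ Eset μ P i ε δhat} with hT
  have hprobT : prob μ {p | PrefixEq i w p.1 ∧ (p.2, w) ∈ Eset μ P i ε δhat}
      = (∑' a, chi T a * M a).toReal := by
    unfold prob; rw [← oT]; rfl
  have hsplit : (∑' a, chi T a * M a) + (∑' a, chi Tᶜ a * M a) = W := by
    rw [← ENNReal.tsum_add, ← hMW]
    refine tsum_congr fun a => ?_
    by_cases ha : a ∈ T <;> simp [chi, ha]
  have hfG : (∑' a, chi T a * M a) ≠ ⊤ := ne_top_of_le_ne_top hWtop (hsplit ▸ le_self_add)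
  have hfB : (∑' a, chi Tᶜ a * M a) ≠ ⊤ := ne_top_of_le_ne_top hWtop (hsplit ▸ le_add_self)
  -- privacy
  have hpriv : ∀ x x' (O : Set Y), ∑' a, chi O a * bker A P i w x a ≤
      ENNReal.ofReal (Real.exp (3 * ε)) * (∑' a, chi O a * bker A P i w x' a)
        + ENNReal.ofReal δ * W := by
    intro x x' O
    rw [bker_sum, bker_sum, hWdef, ← ENNReal.tsum_mul_left, ← ENNReal.tsum_mul_left,
      ← ENNReal.tsum_add]
    refine ENNReal.tsum_le_tsum fun r => ?_
    have hdp := hA ((Equiv.funSplitAt i X).symm (x, r)) ((Equiv.funSplitAt i X).symm (x', r))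
      ⟨i, fun j hj => by simp [Equiv.funSplitAt, hj]⟩ O
    set u := A ((Equiv.funSplitAt i X).symm (x, r))
    set v := A ((Equiv.funSplitAt i X).symm (x', r))
    have h1 : u.toOuterMeasure O ≤
        ENNReal.ofReal (Real.exp (3 * ε)) * v.toOuterMeasure O + ENNReal.ofReal δ := by
      have hv : 0 ≤ prob v O := ENNReal.toReal_nonneg
      have h2 : prob u O ≤ Real.exp (3 * ε) * prob v O + δ := by
        refine hdp.trans ?_
        gcongr
        linarith
      rw [← ENNReal.ofReal_toReal (outer_ne_top u O), ← ENNReal.ofReal_toReal (outer_ne_top v O),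
        ← ENNReal.ofReal_mul (Real.exp_pos _).le, ← ENNReal.ofReal_add (by positivity) hδ]
      exact ENNReal.ofReal_le_ofReal h2
    calc _ ≤ restW P i w r * (ENNReal.ofReal (Real.exp (3 * ε)) * v.toOuterMeasure O
          + ENNReal.ofReal δ) := by gcongr
      _ = _ := by ring
  have hcore := core P (bker A P i w) (ENNReal.ofReal (Real.exp (3 * ε)))
    (ENNReal.ofReal δ * W) (ENNReal.ofReal δhat) W (bker_total A P i w) hWtop hpriv Tᶜ (by
      intro a ha
      by_cases h0 : M a = 0
      · exact Or.inl h0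
      refine Or.inr ?_
      have hMt : M a ≠ ⊤ := by rw [← oa]; exact outer_ne_top _ _
      have hm : 0 < (M a).toReal := ENNReal.toReal_pos h0 hMt
      have ha' : ¬ IndistFn (fun O => prob P O) (fun O => condXi μ i a w O) (3 * ε) δhat := ha
      unfold IndistFn at ha'
      push Not at ha'
      obtain ⟨O, hO⟩ := ha'
      refine ⟨O, ?_⟩
      have q1 : ∑' x, chi O x * (P x * M a) = ENNReal.ofReal (prob P O * (M a).toReal) := by
        unfold prob
        rw [ENNReal.ofReal_mul ENNReal.toReal_nonneg, ENNReal.ofReal_toReal hMt,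
          ENNReal.ofReal_toReal (outer_ne_top _ _), outer_eq, ← ENNReal.tsum_mul_right]
        simp only [mul_assoc]
      have q2 : ∑' x, chi O x * (P x * bker A P i w x a) =
          ENNReal.ofReal (condXi μ i a w O * (M a).toReal) := by
        unfold condXi prob
        rw [oa, div_mul_cancel₀ _ hm.ne', ENNReal.ofReal_toReal (outer_ne_top _ _), oaO]
      have q3 : ENNReal.ofReal δhat * (∑' x, P x * bker A P i w x a) =
          ENNReal.ofReal (δhat * (M a).toReal) := by
        rw [ENNReal.ofReal_mul hδhat.le, ENNReal.ofReal_toReal hMt]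
      have hp : 0 ≤ prob P O := ENNReal.toReal_nonneg
      have hcx : 0 ≤ condXi μ i a w O := div_nonneg ENNReal.toReal_nonneg ENNReal.toReal_nonneg
      have hex := Real.exp_pos (3 * ε)
      change (_ < ∑' x, chi O x * (P x * M a)) ∨
        (_ * (∑' x, chi O x * (P x * M a)) + _ < _)
      rw [q1, q2, q3, ← ENNReal.ofReal_mul hex.le, ← ENNReal.ofReal_mul hex.le,
        ← ENNReal.ofReal_add (by positivity) (by positivity),
        ← ENNReal.ofReal_add (by positivity) (by positivity)]
      rw [ENNReal.ofReal_lt_ofReal_iff_of_nonneg (by positivity),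
        ENNReal.ofReal_lt_ofReal_iff_of_nonneg (by positivity)]
      by_cases hc : prob P O ≤ Real.exp (3 * ε) * condXi μ i a w O + δhat
      · right
        have := mul_lt_mul_of_pos_right (hO hc) hm
        nlinarith [this]
      · left
        have := mul_lt_mul_of_pos_right (not_le.mp hc) hm
        nlinarith [this])
  change ENNReal.ofReal δhat * (∑' a, chi Tᶜ a * M a) ≤ _ at hcore
  rw [hprobW] at hw
  rw [hprobW, hprobT]
  have r1 : (∑' a, chi T a * M a).toReal + (∑' a, chi Tᶜ a * M a).toReal = W.toReal := by
    rw [← ENNReal.toReal_add hfG hfB, hsplit]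
  have r2 : δhat * (∑' a, chi Tᶜ a * M a).toReal ≤ 2 * (δ * W.toReal) := by
    have := ENNReal.toReal_mono (by finiteness) hcore
    simpa [ENNReal.toReal_mul, ENNReal.toReal_ofReal hδhat.le, ENNReal.toReal_ofReal hδ] using this
  set g := (∑' a, chi T a * M a).toReal
  set bb := (∑' a, chi Tᶜ a * M a).toReal
  have r3 : 0 ≤ 2 * δ / (1 - Real.exp (-ε)) := by
    apply div_nonneg (by positivity)
    have : Real.exp (-ε) ≤ 1 := Real.exp_le_one_iff.mpr (by linarith)
    linarith
  have r4 : bb ≤ 2 * δ / δhat * W.toReal := by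
    rw [div_mul_eq_mul_div, le_div_iff₀ hδhat]
    linarith
  rw [le_div_iff₀ hw]
  nlinarith [mul_nonneg r3 hw.le]
end

section
/- Let X be a countable data domain, A : X^n → Y an (ε,δ)-differentially private algorithm, and X = (X₁,…,X_n) ~ P^n. For δ̂ > 0, define G_i(δ̂) as the set of pairs (a, x₁^i) such that both (a, x₁^{i−1}) ∈ E_i(δ̂) and (a, x₁^i) ∈ F_i. Then for each i ∈ {1,…,n}, Pr[ (A(X), X₁^i) ∈ G_i(δ̂) ] ≥ 1 − δ' − δ'', where δ' = 2δ/δ̂ + 2δ/(1 − e^{−ε}) and δ'' = 2δ̂/(1 − e^{−3ε}). -/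
open scoped ENNReal

section Helpers

theorem aux_iid_apply {X : Type*} (P : PMF X) (n : ℕ) (x : Fin n → X) :
    iidPMF P n x = ∏ j, P (x j) := by
  induction n with
  | zero =>
    have : x = (fun i : Fin 0 => i.elim0) := by ext i; exact i.elim0
    simp only [iidPMF, PMF.pure_apply, this]; simp
  | succ n ih =>
    classical
    rw [iidPMF, PMF.bind_apply, tsum_eq_single (x 0)]
    · rw [PMF.map_apply, tsum_eq_single (Fin.tail x)]
      · rw [if_pos (by simp), ih, Fin.prod_univ_succ]; rfl
      · intro y hy
        rw [if_neg]
        intro h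
        apply hy
        rw [h]; simp
    · intro a ha
      rw [PMF.map_apply]
      refine mul_eq_zero_of_right _ (ENNReal.tsum_eq_zero.2 fun y => ?_)
      rw [if_neg]
      intro h
      apply ha
      rw [h]; simp

theorem aux_swap {X Z : Type*} (P : PMF X) (n : ℕ) (i : Fin n) (f : (Fin n → X) → X → PMF Z) :
    ((iidPMF P n).bind fun x => P.bind fun u => f x u) =
      (iidPMF P n).bind fun x => P.bind fun u => f (Function.update x i u) (x i) := by
  classical
  let e : ((Fin n → X) × X) ≃ ((Fin n → X) × X) :=
    { toFun := fun q => (Function.update q.1 i q.2, q.1 i)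
      invFun := fun q => (Function.update q.1 i q.2, q.1 i)
      left_inv := fun q => by simp
      right_inv := fun q => by simp }
  ext z
  simp only [PMF.bind_apply, ← ENNReal.tsum_mul_left]
  rw [← ENNReal.tsum_prod (f := fun x u => iidPMF P n x * (P u * (f x u) z)),
    ← ENNReal.tsum_prod
      (f := fun x u => iidPMF P n x * (P u * (f (Function.update x i u) (x i)) z)),
    ← e.tsum_eq]
  refine tsum_congr fun q => ?_
  obtain ⟨x, u⟩ := q
  simp only [e, Equiv.coe_fn_mk]
  rw [← mul_assoc, ← mul_assoc]
  congr 1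
  rw [aux_iid_apply, aux_iid_apply, ← Finset.mul_prod_erase _ _ (Finset.mem_univ i),
    ← Finset.mul_prod_erase Finset.univ (fun j => P (x j)) (Finset.mem_univ i)]
  have : ∏ j ∈ Finset.univ.erase i, P (Function.update x i u j)
      = ∏ j ∈ Finset.univ.erase i, P (x j) := by
    refine Finset.prod_congr rfl fun j hj => ?_
    rw [Function.update_of_ne (Finset.ne_of_mem_erase hj)]
  rw [this, Function.update_self]
  ring

theorem aux_bind_le {α β : Type*} (p : PMF α) (f g : α → PMF β) (S S' : Set β) (c d : ℝ≥0∞)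
    (h : ∀ a, (f a).toOuterMeasure S ≤ c * (g a).toOuterMeasure S' + d) :
    (p.bind f).toOuterMeasure S ≤ c * (p.bind g).toOuterMeasure S' + d := by
  rw [PMF.toOuterMeasure_bind_apply, PMF.toOuterMeasure_bind_apply]
  calc ∑' a, p a * (f a).toOuterMeasure S
      ≤ ∑' a, (c * (p a * (g a).toOuterMeasure S') + p a * d) := by
        refine ENNReal.tsum_le_tsum fun a => ?_
        calc p a * (f a).toOuterMeasure S ≤ p a * (c * (g a).toOuterMeasure S' + d) := by
              gcongr; exact h a
          _ = _ := by ring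
    _ = _ := by
        rw [ENNReal.tsum_add, ENNReal.tsum_mul_left, ENNReal.tsum_mul_right, p.tsum_coe, one_mul]

theorem aux_le_one {α : Type*} (p : PMF α) (S : Set α) : p.toOuterMeasure S ≤ 1 := by
  rw [← p.tsum_coe, PMF.toOuterMeasure_apply]
  exact ENNReal.tsum_le_tsum fun a => Set.indicator_le_self _ _ _

theorem aux_ne_top {α : Type*} (p : PMF α) (S : Set α) : p.toOuterMeasure S ≠ ⊤ :=
  ne_top_of_le_ne_top ENNReal.one_ne_top (aux_le_one p S)

theorem aux_fiber {X T : Type*} (J : PMF (X × T)) (S : Set (X × T)) :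
    J.toOuterMeasure S = ∑' t, J.toOuterMeasure {p | p.2 = t ∧ p ∈ S} := by
  classical
  simp only [PMF.toOuterMeasure_apply]
  rw [ENNReal.tsum_comm]
  refine tsum_congr fun p => ?_
  rw [tsum_eq_single p.2]
  · by_cases h : p ∈ S <;> simp [h]
  · intro t ht
    simp [ht.symm]

theorem aux_slice {X T : Type*} (J : PMF (X × T)) (t : T) (O : Set X) :
    J.toOuterMeasure {p | p.2 = t ∧ p.1 ∈ O} = ∑' u, O.indicator (fun u => J (u, t)) u := by
  classical
  rw [PMF.toOuterMeasure_apply, ENNReal.tsum_prod']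
  refine tsum_congr fun u => ?_
  rw [tsum_eq_single t]
  · by_cases h : u ∈ O <;> simp [h]
  · intro s hs
    simp [hs]

theorem aux_markov {X T : Type*} (M N R : PMF (X × T)) (B : Set T) (O : T → Set X)
    (c d h : ℝ≥0∞) (hc : c ≠ ⊤)
    (H : ∀ t ∈ B, c * M.toOuterMeasure {p | p.2 = t ∧ p.1 ∈ O t}
      + h * R.toOuterMeasure {p | p.2 = t} ≤ N.toOuterMeasure {p | p.2 = t ∧ p.1 ∈ O t})
    (K : ∀ S, N.toOuterMeasure S ≤ c * M.toOuterMeasure S + d) :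
    h * R.toOuterMeasure {p | p.2 ∈ B} ≤ d := by
  have h1 : c * M.toOuterMeasure {p | p.2 ∈ B ∧ p.1 ∈ O p.2} + h * R.toOuterMeasure {p | p.2 ∈ B}
      ≤ N.toOuterMeasure {p | p.2 ∈ B ∧ p.1 ∈ O p.2} := by
    rw [aux_fiber M, aux_fiber R, aux_fiber N, ← ENNReal.tsum_mul_left, ← ENNReal.tsum_mul_left,
      ← ENNReal.tsum_add]
    refine ENNReal.tsum_le_tsum fun t => ?_
    by_cases ht : t ∈ B
    · have e1 : {p : X × T | p.2 = t ∧ p ∈ {p : X × T | p.2 ∈ B ∧ p.1 ∈ O p.2}}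
          = {p | p.2 = t ∧ p.1 ∈ O t} := by
        ext ⟨u, s⟩; simp only [Set.mem_ofPred_eq]; grind
      have e2 : {p : X × T | p.2 = t ∧ p ∈ {p : X × T | p.2 ∈ B}} = {p | p.2 = t} := by
        ext ⟨u, s⟩; simp only [Set.mem_ofPred_eq]; grind
      rw [e1, e2]; exact H t ht
    · have e1 : {p : X × T | p.2 = t ∧ p ∈ {p : X × T | p.2 ∈ B ∧ p.1 ∈ O p.2}} = ∅ := by
        ext ⟨u, s⟩; simp only [Set.mem_ofPred_eq, Set.mem_empty_iff_false]; grind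
      have e2 : {p : X × T | p.2 = t ∧ p ∈ {p : X × T | p.2 ∈ B}} = ∅ := by
        ext ⟨u, s⟩; simp only [Set.mem_ofPred_eq, Set.mem_empty_iff_false]; grind
      rw [e1, e2]; simp
  have h2 := h1.trans (K _)
  exact (ENNReal.add_le_add_iff_left (ENNReal.mul_ne_top hc (aux_ne_top _ _))).1 h2

theorem aux_small {X T : Type*} (J : PMF (X × T)) (E : Set T) (O : T → Set X) (c : ℝ≥0∞)
    (H : ∀ t ∈ E, J.toOuterMeasure {p | p.2 = t ∧ p.1 ∈ O t}
      ≤ c * J.toOuterMeasure {p | p.2 = t}) :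
    J.toOuterMeasure {p | p.2 ∈ E ∧ p.1 ∈ O p.2} ≤ c := by
  calc _ ≤ c * J.toOuterMeasure Set.univ := by
        rw [aux_fiber J, aux_fiber J Set.univ, ← ENNReal.tsum_mul_left]
        refine ENNReal.tsum_le_tsum fun t => ?_
        by_cases ht : t ∈ E
        · refine le_trans ?_ ((H t ht).trans ?_)
          · apply MeasureTheory.OuterMeasure.mono
            rintro ⟨u, s⟩ hs
            simp only [Set.mem_ofPred_eq] at hs ⊢; grind
          · gcongr; simp
        · have e1 : {p : X × T | p.2 = t ∧ p ∈ {p : X × T | p.2 ∈ E ∧ p.1 ∈ O p.2}} = ∅ := by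
            ext ⟨u, s⟩; simp only [Set.mem_ofPred_eq, Set.mem_empty_iff_false]; grind
          rw [e1]; simp
    _ ≤ c * 1 := by gcongr; exact aux_le_one _ _
    _ = c := mul_one c

/-- conditional probability of a slice -/
noncomputable def auxCond {X T : Type*} (J : PMF (X × T)) (t : T) (O : Set X) : ℝ :=
  (J.toOuterMeasure {p | p.2 = t ∧ p.1 ∈ O}).toReal / (J.toOuterMeasure {p | p.2 = t}).toReal

theorem aux_core {X T : Type*} (P : PMF X) (J Q : PMF (X × T)) (ε δ δhat : ℝ) (hε : 0 < ε)
    (hδ : 0 ≤ δ) (hδhat : 0 < δhat)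
    (hQ : ∀ t O, Q.toOuterMeasure {p | p.2 = t ∧ p.1 ∈ O}
      = J.toOuterMeasure {p | p.2 = t} * P.toOuterMeasure O)
    (hP : ∀ u t, J (u, t) ≤ P u)
    (K1 : ∀ S, J.toOuterMeasure S ≤ ENNReal.ofReal (Real.exp ε) * Q.toOuterMeasure S
      + ENNReal.ofReal δ)
    (K2 : ∀ S, Q.toOuterMeasure S ≤ ENNReal.ofReal (Real.exp ε) * J.toOuterMeasure S
      + ENNReal.ofReal δ) :
    1 - (2 * δ / δhat + 2 * δ / (1 - Real.exp (-ε))) -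
        2 * δhat / (1 - Real.exp (-(3 * ε))) ≤
      prob J {p | IndistFn (fun O => prob P O) (fun O => auxCond J p.2 O) (3 * ε) δhat ∧
        Real.exp (-(6 * ε)) ≤ auxCond J p.2 {p.1} / (P p.1).toReal ∧
        auxCond J p.2 {p.1} / (P p.1).toReal ≤ Real.exp (6 * ε)} := by
  classical
  set r : T → ℝ := fun t => (J.toOuterMeasure {p | p.2 = t}).toReal with hr
  have hr0 : ∀ t, 0 ≤ r t := fun t => ENNReal.toReal_nonneg
  have hrE : ∀ t, J.toOuterMeasure {p | p.2 = t} = ENNReal.ofReal (r t) := fun t =>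
    (ENNReal.ofReal_toReal (aux_ne_top _ _)).symm
  have hjc : ∀ t O, (J.toOuterMeasure {p | p.2 = t ∧ p.1 ∈ O}) =
      ENNReal.ofReal (auxCond J t O * r t) := by
    intro t O
    have hle : J.toOuterMeasure {p | p.2 = t ∧ p.1 ∈ O} ≤ J.toOuterMeasure {p | p.2 = t} :=
      MeasureTheory.OuterMeasure.mono _ (fun p hp => hp.1)
    by_cases h0 : r t = 0
    · rw [h0, mul_zero, ENNReal.ofReal_zero]
      rw [hrE, h0, ENNReal.ofReal_zero] at hle
      exact le_antisymm hle bot_le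
    · rw [auxCond, div_mul_cancel₀ _ h0, ENNReal.ofReal_toReal (aux_ne_top _ _)]
  have hPE : ∀ O, P.toOuterMeasure O = ENNReal.ofReal (prob P O) := fun O =>
    (ENNReal.ofReal_toReal (aux_ne_top _ _)).symm
  have hqc : ∀ t O, (Q.toOuterMeasure {p | p.2 = t ∧ p.1 ∈ O}) =
      ENNReal.ofReal (prob P O * r t) := by
    intro t O
    rw [hQ, hrE, hPE, ← ENNReal.ofReal_mul (hr0 t), mul_comm]
  have hc0 : ∀ t O, 0 ≤ auxCond J t O := fun t O => by unfold auxCond; positivity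
  have hp0 : ∀ O, 0 ≤ prob P O := fun O => ENNReal.toReal_nonneg
  have hexp : Real.exp ε ≤ Real.exp (3 * ε) := Real.exp_le_exp.2 (by linarith)
  -- the two kinds of bad prefixes
  set B1 : Set T := {t | ∃ O, Real.exp (3 * ε) * auxCond J t O + δhat < prob P O} with hB1
  set B2 : Set T := {t | ∃ O, Real.exp (3 * ε) * prob P O + δhat < auxCond J t O} with hB2
  have c1 : ENNReal.ofReal δhat * J.toOuterMeasure {p | p.2 ∈ B1} ≤ ENNReal.ofReal δ := by
    have : ∀ t, ∃ O, t ∈ B1 → Real.exp (3 * ε) * auxCond J t O + δhat < prob P O := by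
      intro t
      by_cases h : t ∈ B1
      · obtain ⟨O, hO⟩ := h; exact ⟨O, fun _ => hO⟩
      · exact ⟨∅, fun h' => absurd h' h⟩
    choose O hO using this
    refine aux_markov J Q J B1 O _ _ _ ENNReal.ofReal_ne_top (fun t ht => ?_) K2
    have := hO t ht
    rw [hjc, hqc, hrE, ← ENNReal.ofReal_mul (Real.exp_pos _).le, ← ENNReal.ofReal_mul hδhat.le,
      ← ENNReal.ofReal_add]
    · apply ENNReal.ofReal_le_ofReal
      have h1 : Real.exp ε * auxCond J t (O t) + δhat ≤ prob P (O t) := by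
        nlinarith [hc0 t (O t)]
      nlinarith [hr0 t]
    · have := hc0 t (O t); have := hr0 t; positivity
    · have := hr0 t; positivity
  have c2 : ENNReal.ofReal δhat * J.toOuterMeasure {p | p.2 ∈ B2} ≤ ENNReal.ofReal δ := by
    have : ∀ t, ∃ O, t ∈ B2 → Real.exp (3 * ε) * prob P O + δhat < auxCond J t O := by
      intro t
      by_cases h : t ∈ B2
      · obtain ⟨O, hO⟩ := h; exact ⟨O, fun _ => hO⟩
      · exact ⟨∅, fun h' => absurd h' h⟩
    choose O hO using this
    refine aux_markov Q J J B2 O _ _ _ ENNReal.ofReal_ne_top (fun t ht => ?_) K1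
    have := hO t ht
    rw [hjc, hqc, hrE, ← ENNReal.ofReal_mul (Real.exp_pos _).le, ← ENNReal.ofReal_mul hδhat.le,
      ← ENNReal.ofReal_add]
    · apply ENNReal.ofReal_le_ofReal
      have h1 : Real.exp ε * prob P (O t) + δhat ≤ auxCond J t (O t) := by
        nlinarith [hp0 (O t)]
      nlinarith [hr0 t]
    · have := hp0 (O t); have := hr0 t; positivity
    · have := hr0 t; positivity
  set E : Set T := {t | IndistFn (fun O => prob P O) (fun O => auxCond J t O) (3 * ε) δhat} with hE
  set O1 : T → Set X := fun t => {u | Real.exp (6 * ε) < auxCond J t {u} / (P u).toReal} with hO1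
  set O2 : T → Set X := fun t => {u | auxCond J t {u} / (P u).toReal < Real.exp (-(6 * ε))} with hO2
  have hsing : ∀ u t, J (u, t) = ENNReal.ofReal (auxCond J t {u} * r t) := by
    intro u t
    rw [← hjc, aux_slice, tsum_eq_single u]
    · simp
    · intro v hv; simp [hv]
  have hPu : ∀ u, P u = ENNReal.ofReal (P u).toReal := fun u =>
    (ENNReal.ofReal_toReal (P.apply_ne_top u)).symm
  have hlt : Real.exp (-(3 * ε)) < 1 := by rw [Real.exp_lt_one_iff]; linarith
  have hs1 : Real.exp (6 * ε) * Real.exp (-(3 * ε)) = Real.exp (3 * ε) := by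
    rw [← Real.exp_add]; congr 1; ring
  have hs2 : Real.exp (-(6 * ε)) * Real.exp (3 * ε) = Real.exp (-(3 * ε)) := by
    rw [← Real.exp_add]; congr 1; ring
  have hs3 : Real.exp (-(6 * ε)) ≤ 1 := by rw [Real.exp_le_one_iff]; linarith
  have c3 : J.toOuterMeasure {p | p.2 ∈ E ∧ p.1 ∈ O1 p.2}
      ≤ ENNReal.ofReal (δhat / (1 - Real.exp (-(3 * ε)))) := by
    refine aux_small J E O1 _ fun t ht => ?_
    rw [hrE, ← ENNReal.ofReal_mul (div_nonneg hδhat.le (by linarith)), hjc]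
    apply ENNReal.ofReal_le_ofReal
    rcases (hr0 t).eq_or_lt with h0 | h0
    · rw [← h0]; simp
    refine mul_le_mul_of_nonneg_right ?_ h0.le
    have hle : ENNReal.ofReal (Real.exp (6 * ε) * r t) * P.toOuterMeasure (O1 t) ≤
        J.toOuterMeasure {p | p.2 = t ∧ p.1 ∈ O1 t} := by
      rw [aux_slice, PMF.toOuterMeasure_apply, ← ENNReal.tsum_mul_left]
      refine ENNReal.tsum_le_tsum fun u => ?_
      by_cases hu : u ∈ O1 t
      · rw [Set.indicator_of_mem hu, Set.indicator_of_mem hu, hsing, hPu,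
          ← ENNReal.ofReal_mul (by positivity)]
        apply ENNReal.ofReal_le_ofReal
        have hu' : Real.exp (6 * ε) < auxCond J t {u} / (P u).toReal := hu
        have hpos : 0 < (P u).toReal := by
          refine lt_of_le_of_ne ENNReal.toReal_nonneg fun h => ?_
          rw [← h, div_zero] at hu'
          exact absurd hu' (Real.exp_pos _).le.not_gt
        rw [lt_div_iff₀ hpos] at hu'
        nlinarith
      · simp [hu]
    rw [hjc, hPE, ← ENNReal.ofReal_mul (by positivity),
      ENNReal.ofReal_le_ofReal_iff (mul_nonneg (hc0 _ _) h0.le)] at hle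
    have hle' : Real.exp (6 * ε) * prob P (O1 t) ≤ auxCond J t (O1 t) := by
      refine le_of_mul_le_mul_right ?_ h0
      linarith
    have h2 := (ht (O1 t)).2
    simp only at h2
    rw [le_div_iff₀ (by linarith)]
    have h3 : Real.exp (3 * ε) * prob P (O1 t) ≤ Real.exp (-(3 * ε)) * auxCond J t (O1 t) := by
      rw [← hs1]
      nlinarith [Real.exp_pos (-(3 * ε))]
    linarith
  have c4 : J.toOuterMeasure {p | p.2 ∈ E ∧ p.1 ∈ O2 p.2}
      ≤ ENNReal.ofReal (δhat / (1 - Real.exp (-(3 * ε)))) := by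
    refine aux_small J E O2 _ fun t ht => ?_
    rw [hrE, ← ENNReal.ofReal_mul (div_nonneg hδhat.le (by linarith)), hjc]
    apply ENNReal.ofReal_le_ofReal
    rcases (hr0 t).eq_or_lt with h0 | h0
    · rw [← h0]; simp
    refine mul_le_mul_of_nonneg_right ?_ h0.le
    have hle : J.toOuterMeasure {p | p.2 = t ∧ p.1 ∈ O2 t} ≤
        ENNReal.ofReal (Real.exp (-(6 * ε)) * r t) * P.toOuterMeasure (O2 t) := by
      rw [aux_slice, PMF.toOuterMeasure_apply, ← ENNReal.tsum_mul_left]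
      refine ENNReal.tsum_le_tsum fun u => ?_
      by_cases hu : u ∈ O2 t
      · rw [Set.indicator_of_mem hu, Set.indicator_of_mem hu]
        by_cases hz : P u = 0
        · have := hP u t
          rw [hz] at this
          exact this.trans bot_le
        rw [hsing, hPu, ← ENNReal.ofReal_mul (by positivity)]
        apply ENNReal.ofReal_le_ofReal
        have hu' : auxCond J t {u} / (P u).toReal < Real.exp (-(6 * ε)) := hu
        have hpos : 0 < (P u).toReal := ENNReal.toReal_pos hz (P.apply_ne_top u)
        rw [div_lt_iff₀ hpos] at hu'
        nlinarith
      · simp [hu]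
    rw [hjc, hPE, ← ENNReal.ofReal_mul (by positivity),
      ENNReal.ofReal_le_ofReal_iff (by have := hp0 (O2 t); positivity)] at hle
    have hle' : auxCond J t (O2 t) ≤ Real.exp (-(6 * ε)) * prob P (O2 t) := by
      refine le_of_mul_le_mul_right ?_ h0
      linarith
    have h2 := (ht (O2 t)).1
    simp only at h2
    rw [le_div_iff₀ (by linarith)]
    have h3 : Real.exp (-(6 * ε)) * prob P (O2 t) ≤
        Real.exp (-(3 * ε)) * auxCond J t (O2 t) + δhat := by
      calc _ ≤ Real.exp (-(6 * ε)) * (Real.exp (3 * ε) * auxCond J t (O2 t) + δhat) :=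
            mul_le_mul_of_nonneg_left h2 (Real.exp_pos _).le
        _ = Real.exp (-(3 * ε)) * auxCond J t (O2 t) + Real.exp (-(6 * ε)) * δhat := by
            rw [← hs2]; ring
        _ ≤ _ := by nlinarith
    linarith
  -- assemble
  set G : Set (X × T) := {p | IndistFn (fun O => prob P O) (fun O => auxCond J p.2 O) (3 * ε) δhat ∧
        Real.exp (-(6 * ε)) ≤ auxCond J p.2 {p.1} / (P p.1).toReal ∧
        auxCond J p.2 {p.1} / (P p.1).toReal ≤ Real.exp (6 * ε)} with hG
  have hcov : (Set.univ : Set (X × T)) ⊆ G ∪ ({p | p.2 ∈ B1} ∪ ({p | p.2 ∈ B2} ∪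
      ({p | p.2 ∈ E ∧ p.1 ∈ O1 p.2} ∪ {p | p.2 ∈ E ∧ p.1 ∈ O2 p.2}))) := by
    rintro ⟨u, t⟩ -
    by_cases hEt : t ∈ E
    · by_cases h1 : u ∈ O1 t
      · exact Or.inr (Or.inr (Or.inr (Or.inl ⟨hEt, h1⟩)))
      by_cases h2 : u ∈ O2 t
      · exact Or.inr (Or.inr (Or.inr (Or.inr ⟨hEt, h2⟩)))
      exact Or.inl ⟨hEt, not_lt.1 h2, not_lt.1 h1⟩
    · have hEt' : ¬ IndistFn (fun O => prob P O) (fun O => auxCond J t O) (3 * ε) δhat := hEt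
      unfold IndistFn at hEt'
      push Not at hEt'
      obtain ⟨O, hO⟩ := hEt'
      by_cases h : prob P O ≤ Real.exp (3 * ε) * auxCond J t O + δhat
      · exact Or.inr (Or.inr (Or.inl ⟨O, hO h⟩))
      · exact Or.inr (Or.inl ⟨O, not_le.1 h⟩)
  have huniv : J.toOuterMeasure Set.univ = 1 := by
    rw [PMF.toOuterMeasure_apply]; simp
  have hsum : 1 ≤ J.toOuterMeasure G + (J.toOuterMeasure {p | p.2 ∈ B1} +
      (J.toOuterMeasure {p | p.2 ∈ B2} + (J.toOuterMeasure {p | p.2 ∈ E ∧ p.1 ∈ O1 p.2} +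
        J.toOuterMeasure {p | p.2 ∈ E ∧ p.1 ∈ O2 p.2}))) := by
    rw [← huniv]
    refine (MeasureTheory.OuterMeasure.mono _ hcov).trans ?_
    refine (MeasureTheory.measure_union_le (μ := J.toOuterMeasure) _ _).trans ?_
    gcongr
    refine (MeasureTheory.measure_union_le (μ := J.toOuterMeasure) _ _).trans ?_
    gcongr
    refine (MeasureTheory.measure_union_le (μ := J.toOuterMeasure) _ _).trans ?_
    gcongr
    exact MeasureTheory.measure_union_le (μ := J.toOuterMeasure) _ _
  have hb : ∀ S, ENNReal.ofReal δhat * J.toOuterMeasure S ≤ ENNReal.ofReal δ →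
      (J.toOuterMeasure S).toReal ≤ δ / δhat := by
    intro S hS
    have := ENNReal.toReal_mono ENNReal.ofReal_ne_top hS
    rw [ENNReal.toReal_mul, ENNReal.toReal_ofReal hδhat.le, ENNReal.toReal_ofReal hδ] at this
    rw [le_div_iff₀ hδhat]; linarith
  have d1 := hb _ c1
  have d2 := hb _ c2
  have hnn : 0 ≤ δhat / (1 - Real.exp (-(3 * ε))) := div_nonneg hδhat.le (by linarith)
  have d3 := ENNReal.toReal_le_of_le_ofReal hnn c3
  have d4 := ENNReal.toReal_le_of_le_ofReal hnn c4
  have hsum' := ENNReal.toReal_mono (by simp [aux_ne_top]) hsum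
  rw [ENNReal.toReal_add (aux_ne_top _ _) (by simp [aux_ne_top]),
    ENNReal.toReal_add (aux_ne_top _ _) (by simp [aux_ne_top]),
    ENNReal.toReal_add (aux_ne_top _ _) (by simp [aux_ne_top]),
    ENNReal.toReal_add (aux_ne_top _ _) (aux_ne_top _ _), ENNReal.toReal_one] at hsum'
  have hlt1 : Real.exp (-ε) < 1 := by rw [Real.exp_lt_one_iff]; linarith
  have hx : 0 ≤ 2 * δ / (1 - Real.exp (-ε)) := div_nonneg (by linarith) (by linarith)
  have hy : 2 * δ / δhat = δ / δhat + δ / δhat := by ring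
  have hz : 2 * δhat / (1 - Real.exp (-(3 * ε))) = δhat / (1 - Real.exp (-(3 * ε)))
    + δhat / (1 - Real.exp (-(3 * ε))) := by ring
  unfold prob
  rw [hy, hz]
  linarith

end Helpers

/-- **Claim 3.6.**  If `A` is `(ε,δ)`-differentially private and `X ∼ P^n`, then
for each `i`, `Pr[(A(X), X₁^i) ∈ G_i(δ̂)] ≥ 1 - δ' - δ''` where
`δ' = 2δ/δ̂ + 2δ/(1 - e^{-ε})` and `δ'' = 2δ̂/(1 - e^{-3ε})`. -/
theorem stmt_9 {X Y : Type*} [Countable X] {n : ℕ} (A : (Fin n → X) → PMF Y)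
    (ε δ δhat : ℝ) (hε : 0 < ε) (hδhat : 0 < δhat) (hA : DiffPrivate A ε δ)
    (P : PMF X) (i : Fin n) :
    1 - (2 * δ / δhat + 2 * δ / (1 - Real.exp (-ε))) -
        2 * δhat / (1 - Real.exp (-(3 * ε))) ≤
      prob (jointPMF (iidPMF P n) A)
        {p | (p.2, p.1) ∈ Gset (jointPMF (iidPMF P n) A) P i ε δhat} := by
  classical
  obtain ⟨u0, -⟩ := P.support_nonempty
  have hδ : 0 ≤ δ := by
    have := hA (fun _ => u0) (fun _ => u0) ⟨i, fun _ _ => rfl⟩ ∅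
    simpa [prob] using this
  have hAE : ∀ x x' : Fin n → X, Neighbor x x' → ∀ O : Set Y, (A x).toOuterMeasure O ≤
      ENNReal.ofReal (Real.exp ε) * (A x').toOuterMeasure O + ENNReal.ofReal δ := by
    intro x x' h O
    have := ENNReal.ofReal_le_ofReal (hA x x' h O)
    unfold prob at this
    rwa [ENNReal.ofReal_add (by positivity) hδ, ENNReal.ofReal_mul (Real.exp_pos _).le,
      ENNReal.ofReal_toReal (aux_ne_top _ _), ENNReal.ofReal_toReal (aux_ne_top _ _)] at this
  set μ := jointPMF (iidPMF P n) A with hμ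
  let pre : (Fin n → X) → ({j : Fin n // (j : ℕ) < (i : ℕ)} → X) := fun x j => x j
  let g : (Fin n → X) × Y → X × (Y × ({j : Fin n // (j : ℕ) < (i : ℕ)} → X)) :=
    fun p => (p.1 i, (p.2, pre p.1))
  have hpre : ∀ w x, PrefixEq i w x ↔ pre x = pre w := by
    intro w x
    constructor
    · intro h; ext j; exact h j j.2
    · intro h j hj; exact congrFun h ⟨j, hj⟩
  have hpreU : ∀ x u, pre (Function.update x i u) = pre x := by
    intro x u; ext j
    have : (j : Fin n) ≠ i := fun h => by have := j.2; rw [h] at this; exact lt_irrefl _ this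
    simp only [pre]
    rw [Function.update_of_ne this]
  set J := μ.map g with hJ
  set Q := (J.map Prod.snd).bind (fun t => P.map fun u => (u, t)) with hQ
  have hcond : ∀ a w O, condXi μ i a w O = auxCond J (a, pre w) O := by
    intro a w O
    unfold condXi auxCond prob
    rw [hJ, PMF.toOuterMeasure_map_apply, PMF.toOuterMeasure_map_apply]
    congr 3
    · ext ⟨x, y⟩
      simp only [Set.mem_preimage, Set.mem_ofPred_eq, hpre, g, Prod.mk.injEq]; tauto
    · ext ⟨x, y⟩
      simp only [Set.mem_preimage, Set.mem_ofPred_eq, hpre, g, Prod.mk.injEq]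
  have hJ' : J = (iidPMF P n).bind fun x => P.bind fun _ =>
      (A x).map fun y => (x i, (y, pre x)) := by
    rw [hJ, hμ, jointPMF, PMF.map_bind]
    congr 1; funext x
    rw [PMF.bind_const, PMF.map_comp]; rfl
  have hQ' : Q = (iidPMF P n).bind fun x => P.bind fun u =>
      (A (Function.update x i u)).map fun y => (x i, (y, pre x)) := by
    have h1 : Q = (iidPMF P n).bind fun x => P.bind fun u =>
        (A x).map fun y => (u, (y, pre x)) := by
      rw [hQ, hJ, hμ, jointPMF, PMF.map_bind, PMF.map_bind, PMF.bind_bind]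
      congr 1; funext x
      rw [PMF.map_comp, PMF.map_comp, PMF.bind_map]
      simp only [PMF.map, Function.comp_def]
      rw [PMF.bind_comm]
    rw [h1, aux_swap P n i]
    simp only [hpreU]
  have hmarg : J.map Prod.fst = P := by
    rw [hJ', PMF.map_bind]
    have h1 : ∀ x, (P.bind fun _ => (A x).map fun y => (x i, (y, pre x))).map Prod.fst
        = P.bind fun _ => PMF.pure (x i) := by
      intro x
      rw [PMF.bind_const, PMF.bind_const, PMF.map_comp]
      exact PMF.map_const _ _
    simp only [h1]
    rw [← aux_swap P n i (fun _ u => PMF.pure u)]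
    simp
  have key := aux_core P J Q ε δ δhat hε hδ hδhat ?_ ?_ ?_ ?_
  · refine key.trans (le_of_eq ?_)
    unfold prob
    rw [hJ, PMF.toOuterMeasure_map_apply]
    congr 2
    ext ⟨x, y⟩
    simp only [Set.mem_preimage, Set.mem_ofPred_eq, Gset, Eset, Fset, hcond]
    rfl
  · intro t O
    rw [hQ, PMF.toOuterMeasure_bind_apply, tsum_eq_single t]
    · rw [PMF.toOuterMeasure_map_apply]
      congr 1
      · rw [← PMF.toOuterMeasure_apply_singleton, PMF.toOuterMeasure_map_apply]; rfl
      · congr 1; ext u; simp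
    · intro s hs
      rw [PMF.toOuterMeasure_map_apply]
      have : ((fun u => (u, s)) ⁻¹' {p : X × (Y × ({j : Fin n // (j : ℕ) < (i : ℕ)} → X)) |
          p.2 = t ∧ p.1 ∈ O}) = ∅ := by
        ext u; simp [hs]
      rw [this]; simp
  · intro u t
    rw [← PMF.toOuterMeasure_apply_singleton P, ← hmarg, PMF.toOuterMeasure_map_apply,
      ← PMF.toOuterMeasure_apply_singleton]
    apply MeasureTheory.OuterMeasure.mono
    rintro _ rfl; rfl
  · intro S
    rw [hJ', hQ']
    refine aux_bind_le _ _ _ _ _ _ _ fun x => aux_bind_le _ _ _ _ _ _ _ fun u => ?_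
    rw [PMF.toOuterMeasure_map_apply, PMF.toOuterMeasure_map_apply]
    exact hAE _ _ ⟨i, fun j hj => by rw [Function.update_of_ne hj]⟩ _
  · intro S
    rw [hJ', hQ']
    refine aux_bind_le _ _ _ _ _ _ _ fun x => aux_bind_le _ _ _ _ _ _ _ fun u => ?_
    rw [PMF.toOuterMeasure_map_apply, PMF.toOuterMeasure_map_apply]
    exact hAE _ _ ⟨i, fun j hj => by rw [Function.update_of_ne hj]⟩ _
end
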